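/- In S_7, the 57 permutations of the cyclic sequence generated from initial permutation [3,4,5,2,1] extended appropriately — formally: there exists a cyclic sequence of 57 distinct even permutations of S_5 such that consecutive elements (cyclically) differ by a push-to-the-top operation t_3 or t_5; i.e., there exists a (5,57,K)-snake. -/

import Mathlib

def adjTranspositions (n : ℕ) : Set (Equiv.Perm (Fin n)) :=
  {s | ∃ i j : Fin n, (j : ℕ) = (i : ℕ) + 1 ∧ s = Equiv.swap i j}

/-- Kendall's τ-distance on `S_n`. -/
noncomputable def kendall {n : ℕ} (σ π : Equiv.Perm (Fin n)) : ℕ :=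
  sInf {k | ∃ l : List (Equiv.Perm (Fin n)), l.length = k ∧
    (∀ s ∈ l, s ∈ adjTranspositions n) ∧ σ * l.prod = π}

/-- Push-to-the-top operation `t_{i+1}` (1-indexed). -/
def pushToTop {n : ℕ} (i : Fin n) (π : Equiv.Perm (Fin n)) : Equiv.Perm (Fin n) :=
  π * (Fin.cycleRange i)⁻¹

/-!
Applying a word of push operations of length `19` whose product `h` is a `3`-cycle three times in a
row closes up after `3 * 19 = 57` steps, and the permutation reached after `19 * q + r` steps is
`h ^ q` times the one reached after `r` steps. Left multiplication by `h` does not move the two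
symbols that `h` fixes, so there are no repetitions as soon as the ordered pair of positions of
these two symbols takes `19` of its `20` possible values during one pass of the word. Pushes on odd
indices are even permutations, and distinct permutations of equal sign are at Kendall distance at
least `2`.
-/

section Kendall

variable {n : ℕ} {σ π : Equiv.Perm (Fin n)}

theorem sign_of_mem_adjTranspositions {s : Equiv.Perm (Fin n)} (hs : s ∈ adjTranspositions n) :
    Equiv.Perm.sign s = -1 := by
  obtain ⟨i, j, hij, rfl⟩ := hs
  exact Equiv.Perm.sign_swap fun h => by simp [h] at hij

theorem closure_adjTranspositions (n : ℕ) : Submonoid.closure (adjTranspositions n) = ⊤ := by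
  cases n with
  | zero => exact Subsingleton.elim _ _
  | succ n =>
    refine top_unique ?_
    rw [← Equiv.Perm.mclosure_swap_castSucc_succ n]
    refine Submonoid.closure_mono ?_
    rintro _ ⟨i, rfl⟩
    exact ⟨i.castSucc, i.succ, by simp, rfl⟩

theorem exists_list_length_eq_kendall (σ π : Equiv.Perm (Fin n)) :
    ∃ l : List (Equiv.Perm (Fin n)), l.length = kendall σ π ∧
      (∀ s ∈ l, s ∈ adjTranspositions n) ∧ σ * l.prod = π := by
  have hmem : σ⁻¹ * π ∈ Submonoid.closure (adjTranspositions n) := by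
    simp [closure_adjTranspositions]
  obtain ⟨l, hl, hprod⟩ := Submonoid.exists_list_of_mem_closure hmem
  have hne : {k | ∃ l : List (Equiv.Perm (Fin n)), l.length = k ∧
      (∀ s ∈ l, s ∈ adjTranspositions n) ∧ σ * l.prod = π}.Nonempty :=
    ⟨l.length, l, rfl, hl, by rw [hprod, mul_inv_cancel_left]⟩
  exact Nat.sInf_mem hne

theorem sign_mul_neg_one_pow_kendall (σ π : Equiv.Perm (Fin n)) :
    Equiv.Perm.sign σ * (-1) ^ kendall σ π = Equiv.Perm.sign π := by
  obtain ⟨l, hlen, hl, rfl⟩ := exists_list_length_eq_kendall σ π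
  have hsign : ∀ ε ∈ l.map Equiv.Perm.sign, ε = -1 :=
    List.forall_mem_map.2 fun s hs => sign_of_mem_adjTranspositions (hl s hs)
  rw [map_mul, map_list_prod, List.prod_eq_pow_card _ _ hsign, List.length_map, hlen]

theorem eq_of_kendall_eq_zero (h : kendall σ π = 0) : σ = π := by
  obtain ⟨l, hlen, -, rfl⟩ := exists_list_length_eq_kendall σ π
  rw [List.eq_nil_of_length_eq_zero (hlen.trans h), List.prod_nil, mul_one]

theorem even_kendall_of_sign_eq (h : Equiv.Perm.sign σ = Equiv.Perm.sign π) :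
    Even (kendall σ π) := by
  have hpow : (-1 : ℤˣ) ^ kendall σ π = 1 := by
    simpa [h] using sign_mul_neg_one_pow_kendall σ π
  exact (neg_one_pow_eq_one_iff_even (by decide)).1 hpow

theorem two_le_kendall (hne : σ ≠ π) (h : Equiv.Perm.sign σ = Equiv.Perm.sign π) :
    2 ≤ kendall σ π := by
  have hpos : kendall σ π ≠ 0 := mt eq_of_kendall_eq_zero hne
  have heven := even_kendall_of_sign_eq h
  grind

end Kendall

section Walk

variable {M : Type*} [Monoid M]

/-- The product `g 0 * ⋯ * g (k - 1)`: the element reached from `1` after `k` steps when step `i`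
is right multiplication by `g i`. -/
def walk (g : ℕ → M) (k : ℕ) : M :=
  ((List.range k).map g).prod

theorem walk_succ (g : ℕ → M) (k : ℕ) : walk g (k + 1) = walk g k * g k :=
  List.prod_range_succ g k

theorem walk_period_add {g : ℕ → M} {m : ℕ} (hg : Function.Periodic g m) (k : ℕ) :
    walk g (m + k) = walk g m * walk g k := by
  have hshift : g ∘ (m + ·) = g := funext fun i => by
    rw [Function.comp_apply, add_comm, hg i]
  rw [walk, List.range_add, List.map_append, List.prod_append, List.map_map, hshift, walk, walk]

theorem walk_period_mul_add {g : ℕ → M} {m : ℕ} (hg : Function.Periodic g m) (q r : ℕ) :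
    walk g (m * q + r) = walk g m ^ q * walk g r := by
  induction q with
  | zero => simp
  | succ q ih =>
    rw [show m * (q + 1) + r = m + (m * q + r) by ring, walk_period_add hg, ih, pow_succ',
      mul_assoc]

theorem periodic_walk {g : ℕ → M} {m : ℕ} (hg : Function.Periodic g m) :
    Function.Periodic (walk g) (m * orderOf (walk g m)) := fun k => by
  rw [add_comm, walk_period_mul_add hg, pow_orderOf_eq_one, one_mul]

theorem injOn_walk [IsRightCancelMul M] {α : Type*} {g : ℕ → M} {m : ℕ}
    (hg : Function.Periodic g m) {f : M → α} (hf : ∀ x, f (walk g m * x) = f x)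
    (hinj : Set.InjOn (fun r => f (walk g r)) (Set.Iio m)) :
    Set.InjOn (walk g) (Set.Iio (m * orderOf (walk g m))) := by
  intro k hk l hl hkl
  have hm : 0 < m := Nat.pos_of_mul_pos_right (Nat.zero_lt_of_lt hk)
  have decompose (k : ℕ) : walk g k = walk g m ^ (k / m) * walk g (k % m) := by
    rw [← walk_period_mul_add hg, Nat.div_add_mod]
  have hpow (q : ℕ) (x : M) : f (walk g m ^ q * x) = f x := by
    induction q with
    | zero => simp
    | succ q ih => rw [pow_succ', mul_assoc, hf, ih]
  have hmod : k % m = l % m := by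
    refine hinj (Nat.mod_lt k hm) (Nat.mod_lt l hm) ?_
    have hfkl : f (walk g k) = f (walk g l) := congrArg f hkl
    rwa [decompose k, decompose l, hpow, hpow] at hfkl
  have hdiv : k / m = l / m := by
    rw [decompose k, decompose l, hmod, mul_left_inj] at hkl
    exact pow_injOn_Iio_orderOf (Nat.div_lt_of_lt_mul hk) (Nat.div_lt_of_lt_mul hl) hkl
  rw [← Nat.div_add_mod k m, ← Nat.div_add_mod l m, hmod, hdiv]

end Walk

theorem apply_val_add_one_of_periodic {α : Type*} {N : ℕ} [NeZero N] {f : ℕ → α}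
    (hf : Function.Periodic f N) (k : Fin N) : f ↑(k + 1) = f (k + 1) := by
  rw [Fin.val_add, Fin.val_one', Nat.add_mod_mod, hf.map_mod_nat]

section PushWalk

variable {n : ℕ}

/-- The permutation reached from the identity by applying `pushToTop (s 0)`, …,
`pushToTop (s (k - 1))` in this order. -/
def pushWalk (s : ℕ → Fin n) : ℕ → Equiv.Perm (Fin n) :=
  walk fun i => (Fin.cycleRange (s i))⁻¹

theorem pushWalk_succ (s : ℕ → Fin n) (k : ℕ) :
    pushWalk s (k + 1) = pushToTop (s k) (pushWalk s k) :=
  walk_succ _ k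

theorem periodic_pushWalk {s : ℕ → Fin n} {m : ℕ} (hs : Function.Periodic s m) :
    Function.Periodic (pushWalk s) (m * orderOf (pushWalk s m)) :=
  periodic_walk (hs.comp fun i => (Fin.cycleRange i)⁻¹)

theorem injOn_pushWalk {α : Type*} {s : ℕ → Fin n} {m : ℕ} (hs : Function.Periodic s m)
    {f : Equiv.Perm (Fin n) → α} (hf : ∀ π, f (pushWalk s m * π) = f π)
    (hinj : Set.InjOn (fun r => f (pushWalk s r)) (Set.Iio m)) :
    Set.InjOn (pushWalk s) (Set.Iio (m * orderOf (pushWalk s m))) :=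
  injOn_walk (hs.comp fun i => (Fin.cycleRange i)⁻¹) hf hinj

theorem sign_pushToTop {i : Fin n} (hi : Even (i : ℕ)) (π : Equiv.Perm (Fin n)) :
    Equiv.Perm.sign (pushToTop i π) = Equiv.Perm.sign π := by
  simp [pushToTop, Fin.sign_cycleRange, hi.neg_one_pow]

theorem sign_pushWalk {s : ℕ → Fin n} (hs : ∀ i, Even (s i : ℕ)) (k : ℕ) :
    Equiv.Perm.sign (pushWalk s k) = 1 := by
  induction k with
  | zero => simp [pushWalk, walk]
  | succ k ih => rw [pushWalk_succ, sign_pushToTop (hs k), ih]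

end PushWalk

section Snake

/-- One period of the push operations of the snake, `2` standing for `t_3` and `4` for `t_5`. It was
found by a search for closed walks of length `19` on the `20` ordered pairs of positions of the
symbols `3` and `4`. -/
def snakeWord : Fin 19 → Fin 5 :=
  ![4, 4, 4, 2, 4, 4, 4, 4, 2, 2, 4, 2, 4, 2, 4, 4, 4, 2, 4]

/-- The push operations of the snake: `snakeWord` repeated indefinitely. -/
def snakePush (k : ℕ) : Fin 5 :=
  snakeWord (Fin.ofNat 19 k)

theorem even_snakePush (k : ℕ) : Even (snakePush k : ℕ) := by
  have hword : ∀ i, Even (snakeWord i : ℕ) := by decide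
  exact hword _

theorem periodic_snakePush : Function.Periodic snakePush 19 := fun k => by
  simp [snakePush, Fin.ofNat]

/-- The `k`-th codeword of the snake. -/
def snake : ℕ → Equiv.Perm (Fin 5) :=
  pushWalk snakePush

theorem snake_nineteen : snake 19 = Equiv.swap 1 0 * Equiv.swap 1 2 := by
  decide +kernel

theorem orderOf_snake_nineteen : orderOf (snake 19) = 3 := by
  rw [snake_nineteen]
  exact (Equiv.Perm.isThreeCycle_swap_mul_swap_same (by decide) (by decide) (by decide)).orderOf

/-- The positions of the symbols `3` and `4`, the two fixed points of `snake 19`. -/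
def markerPositions (σ : Equiv.Perm (Fin 5)) : Fin 5 × Fin 5 :=
  (σ⁻¹ 3, σ⁻¹ 4)

theorem markerPositions_snake_nineteen_mul (σ : Equiv.Perm (Fin 5)) :
    markerPositions (snake 19 * σ) = markerPositions σ := by
  have hthree : (snake 19)⁻¹ 3 = 3 := by rw [snake_nineteen]; decide
  have hfour : (snake 19)⁻¹ 4 = 4 := by rw [snake_nineteen]; decide
  simp only [markerPositions, mul_inv_rev, Equiv.Perm.mul_apply, hthree, hfour]

theorem injOn_markerPositions_snake :
    Set.InjOn (fun r => markerPositions (snake r)) (Set.Iio 19) := by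
  have hinj : ∀ k < 19, ∀ l < 19,
      markerPositions (snake k) = markerPositions (snake l) → k = l := by
    decide +kernel
  exact fun k hk l hl => hinj k hk l hl

theorem periodic_snake : Function.Periodic snake 57 := by
  have h := periodic_pushWalk periodic_snakePush
  rwa [← snake, orderOf_snake_nineteen] at h

theorem injOn_snake : Set.InjOn snake (Set.Iio 57) := by
  have h := injOn_pushWalk periodic_snakePush
    markerPositions_snake_nineteen_mul injOn_markerPositions_snake
  rwa [← snake, orderOf_snake_nineteen] at h

end Snake

/-- There exists a `(5,57,K)`-snake: a cyclic sequence of 57 distinct even permutations of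
`S_5` in which consecutive elements (cyclically) differ by a push-to-the-top operation on an
odd index (`t_3` or `t_5`, i.e. even 0-indexed position), and any two distinct codewords are
at Kendall's τ-distance at least 2. -/
theorem stmt_17 :
    ∃ c : Fin 57 → Equiv.Perm (Fin 5),
      Function.Injective c ∧
      (∀ k : Fin 57, ∃ i : Fin 5, Even (i : ℕ) ∧ c (k + 1) = pushToTop i (c k)) ∧
      (∀ k : Fin 57, Equiv.Perm.sign (c k) = 1) ∧
      (∀ k l : Fin 57, k ≠ l → 2 ≤ kendall (c k) (c l)) := by
  have hsign (k : Fin 57) : Equiv.Perm.sign (snake k) = 1 := sign_pushWalk even_snakePush k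
  have hinj : Function.Injective fun k : Fin 57 => snake k := fun k l h =>
    Fin.ext (injOn_snake k.isLt l.isLt h)
  refine ⟨fun k => snake k, hinj, fun k => ⟨snakePush k, even_snakePush k, ?_⟩, hsign,
    fun k l hkl => two_le_kendall (hinj.ne hkl) ((hsign k).trans (hsign l).symm)⟩
  exact (apply_val_add_one_of_periodic periodic_snake k).trans (pushWalk_succ snakePush k)
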